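/- The stationary distribution corresponding to a rate function u is factorised, both in the SLRMP (q = 1, general rate parameters) and in the homogeneous SLRMP (q = 1, all rate parameters equal to 1), if and only if for all m, n ≥ 1, u(m,n)/(u(m,0)·u(1,n)) = u(n+1,m−1)/(u(n+1,0)·u(1,m−1)). In that case the one-point function f(x,n) = x^n ∏_{i=1}^{n} (u(1,i−1)/u(i,0)) works for the SLRMP, and f(n) = ∏_{i=1}^{n} (u(1,i−1)/u(i,0)) works for the homogeneous SLRMP. -/

import Mathlib

open scoped Classical

namespace LRMP

/-- A rate function: `u m n` is positive when the departure site is occupied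
(`m ≥ 1`) and zero when it is empty (`m = 0`). -/
def IsRate (u : ℕ → ℕ → ℝ) : Prop :=
  (∀ m n : ℕ, 1 ≤ m → 0 < u m n) ∧ ∀ n : ℕ, u 0 n = 0

/-- The configuration `η^{k,ℓ}`: one particle moved from site `k` to site `ℓ`. -/
def move (L : ℕ) (η : ZMod L → ℕ) (k ℓ : ZMod L) : ZMod L → ℕ :=
  fun a => if a = k then η a - 1 else if a = ℓ then η a + 1 else η a

/-- Every site strictly between `k` and `ℓ`, moving clockwise from `k`, is empty in `η`. -/
def RightClear (L : ℕ) (η : ZMod L → ℕ) (k ℓ : ZMod L) : Prop :=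
  ∀ i : ℕ, 0 < i → i < (ℓ - k).val → η (k + (i : ZMod L)) = 0

/-- Every site strictly between `k` and `ℓ`, moving counterclockwise from `k`, is empty in `η`. -/
def LeftClear (L : ℕ) (η : ZMod L → ℕ) (k ℓ : ZMod L) : Prop :=
  ∀ i : ℕ, 0 < i → i < (k - ℓ).val → η (k - (i : ZMod L)) = 0

/-- The total rate of the transition `η → η^{k,ℓ}` in the PALRMP with rate function `u`,
rate parameters `x` and asymmetry parameter `q`: a clockwise (right) hop contributes
`x ℓ * u (η k) (η ℓ)` and a counterclockwise (left) hop contributes `q * x ℓ * u (η k) (η ℓ)`. -/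
noncomputable def hopRate (L : ℕ) (u : ℕ → ℕ → ℝ) (x : ZMod L → ℝ) (q : ℝ)
    (η : ZMod L → ℕ) (k ℓ : ZMod L) : ℝ :=
  (if k ≠ ℓ ∧ 1 ≤ η k ∧ RightClear L η k ℓ then x ℓ * u (η k) (η ℓ) else 0) +
  (if k ≠ ℓ ∧ 1 ≤ η k ∧ LeftClear L η k ℓ then q * (x ℓ * u (η k) (η ℓ)) else 0)

/-- The incoming probability current into `η`: the sum over pairs `(k, ℓ)` of the
probability current due to the transition into `η` in which a particle moves from
site `k` to site `ℓ` (coming from the configuration `η^{ℓ,k} = move L η ℓ k`). -/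
noncomputable def inflow (L : ℕ) [NeZero L] (u : ℕ → ℕ → ℝ) (x : ZMod L → ℝ) (q : ℝ)
    (π : (ZMod L → ℕ) → ℝ) (η : ZMod L → ℕ) : ℝ :=
  ∑ k : ZMod L, ∑ ℓ : ZMod L,
    if 1 ≤ η ℓ then π (move L η ℓ k) * hopRate L u x q (move L η ℓ k) k ℓ else 0

/-- The outgoing probability current out of `η`. -/
noncomputable def outflow (L : ℕ) [NeZero L] (u : ℕ → ℕ → ℝ) (x : ZMod L → ℝ) (q : ℝ)
    (π : (ZMod L → ℕ) → ℝ) (η : ZMod L → ℕ) : ℝ :=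
  ∑ k : ZMod L, ∑ ℓ : ZMod L, π η * hopRate L u x q η k ℓ

/-- `π` satisfies the master (balance) equation of the PALRMP on `Ω_{L,N}`:
for every configuration `η` with `N` particles, the incoming probability current
equals the outgoing probability current. -/
def IsStationary (L : ℕ) [NeZero L] (N : ℕ) (u : ℕ → ℕ → ℝ) (x : ZMod L → ℝ) (q : ℝ)
    (π : (ZMod L → ℕ) → ℝ) : Prop :=
  ∀ η : ZMod L → ℕ, (∑ a, η a) = N → inflow L u x q π η = outflow L u x q π η

/-- The stationary distribution corresponding to the rate `u` in the PALRMP with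
asymmetry parameter `q` is factorised, with one-point function `f`: for every
`L ≥ 2`, `N ≥ 1` and all positive rate parameters `x`, the factorised distribution
`η ↦ ∏_ℓ f (x ℓ) (η ℓ)` (up to normalisation) is stationary. -/
def FactorisedPALRMP (u : ℕ → ℕ → ℝ) (q : ℝ) (f : ℝ → ℕ → ℝ) : Prop :=
  (∀ (x : ℝ) (n : ℕ), 0 < x → 0 < f x n) ∧
  ∀ (L N : ℕ) [NeZero L], 2 ≤ L → 1 ≤ N →
    ∀ x : ZMod L → ℝ, (∀ ℓ, 0 < x ℓ) →
      IsStationary L N u x q (fun η => ∏ ℓ, f (x ℓ) (η ℓ))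

/-- The stationary distribution corresponding to the rate `u` in the homogeneous
PALRMP (all rate parameters equal to `1`) with asymmetry parameter `q` is factorised,
with one-point function `f`. -/
def FactorisedHomog (u : ℕ → ℕ → ℝ) (q : ℝ) (f : ℕ → ℝ) : Prop :=
  (∀ n : ℕ, 0 < f n) ∧
  ∀ (L N : ℕ) [NeZero L], 2 ≤ L → 1 ≤ N →
    IsStationary L N u (fun _ => (1 : ℝ)) q (fun η => ∏ ℓ, f (η ℓ))

end LRMP

/-! At `q = 1` a hop and its reversal use the same arcs of the ring, so a product measure is
reversible, hence stationary, as soon as its single-site weights balance across each pair of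
sites. Conversely, on the ring of two sites the configurations with `N` particles form a path, on
which stationarity forces the net current through every edge to vanish: the single-site weights
balance. The balance equations for `(m, 0)` and `(n, 0)` determine the weights up to a geometric
factor; substituted into the equation for `(m, n)`, they leave the condition on `u`. -/

namespace LRMP

section Dynamics

variable {L : ℕ} {η : ZMod L → ℕ} {k ℓ : ZMod L}

theorem move_source : move L η k ℓ k = η k - 1 := by
  simp [move]

theorem move_target (hkℓ : k ≠ ℓ) : move L η k ℓ ℓ = η ℓ + 1 := by
  simp [move, hkℓ.symm]

theorem move_of_ne_of_ne {a : ZMod L} (hk : a ≠ k) (hℓ : a ≠ ℓ) : move L η k ℓ a = η a := by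
  simp [move, hk, hℓ]

theorem leftClear_iff_rightClear [NeZero L] : LeftClear L η k ℓ ↔ RightClear L η ℓ k := by
  have reflect : ∀ i ≤ (k - ℓ).val, ℓ + (((k - ℓ).val - i : ℕ) : ZMod L) = k - i := by
    intro i hi
    rw [Nat.cast_sub hi, ZMod.natCast_zmod_val]
    ring
  constructor
  · intro h i hpos hlt
    rw [← Nat.sub_sub_self hlt.le, reflect _ (Nat.sub_le _ _)]
    exact h _ (Nat.sub_pos_of_lt hlt) (by omega)
  · intro h i hpos hlt
    rw [← reflect i hlt.le]
    exact h _ (Nat.sub_pos_of_lt hlt) (by omega)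

theorem rightClear_congr [NeZero L] {ζ : ZMod L → ℕ} (h : ∀ a, a ≠ k → a ≠ ℓ → η a = ζ a) :
    RightClear L η k ℓ ↔ RightClear L ζ k ℓ := by
  refine forall₃_congr fun i hpos hlt => ?_
  have hval : (i : ZMod L).val = i := ZMod.val_natCast_of_lt (hlt.trans (ZMod.val_lt _))
  have hsource : k + (i : ZMod L) ≠ k := by
    intro heq
    rw [add_eq_left.mp heq, ZMod.val_zero] at hval
    exact hpos.ne hval
  have htarget : k + (i : ZMod L) ≠ ℓ := by
    intro heq
    rw [← heq, add_sub_cancel_left, hval] at hlt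
    exact hlt.false
  rw [h _ hsource htarget]

/-- The number (`0`, `1` or `2`) of arcs from `k` to `ℓ` whose interior sites are all empty, as a
real number: at `q = 1` it is the factor by which a hop from `k` to `ℓ` is accelerated. -/
noncomputable def clearArcs (L : ℕ) (η : ZMod L → ℕ) (k ℓ : ZMod L) : ℝ :=
  (if RightClear L η k ℓ then 1 else 0) + (if LeftClear L η k ℓ then 1 else 0)

theorem clearArcs_move [NeZero L] : clearArcs L (move L η k ℓ) ℓ k = clearArcs L η k ℓ := by
  have hright : RightClear L (move L η k ℓ) ℓ k ↔ LeftClear L η k ℓ :=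
    (rightClear_congr fun _ hℓ hk => move_of_ne_of_ne hk hℓ).trans leftClear_iff_rightClear.symm
  have hleft : LeftClear L (move L η k ℓ) ℓ k ↔ RightClear L η k ℓ :=
    leftClear_iff_rightClear.trans (rightClear_congr fun _ hk hℓ => move_of_ne_of_ne hk hℓ)
  simp only [clearArcs, hright, hleft, add_comm]

variable {u : ℕ → ℕ → ℝ} {x : ZMod L → ℝ} {q : ℝ}

theorem hopRate_self : hopRate L u x q η k k = 0 := by
  simp [hopRate]

theorem hopRate_of_source_eq_zero (hk : η k = 0) : hopRate L u x q η k ℓ = 0 := by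
  simp [hopRate, hk]

theorem hopRate_one_eq_clearArcs_mul (hkℓ : k ≠ ℓ) (hk : 1 ≤ η k) :
    hopRate L u x 1 η k ℓ = clearArcs L η k ℓ * (x ℓ * u (η k) (η ℓ)) := by
  simp [hopRate, clearArcs, hkℓ, hk, add_mul]

theorem isStationary_of_reversible [NeZero L] {N : ℕ} {π : (ZMod L → ℕ) → ℝ}
    (h : ∀ η k ℓ, k ≠ ℓ → 1 ≤ η k →
      π (move L η k ℓ) * hopRate L u x q (move L η k ℓ) ℓ k = π η * hopRate L u x q η k ℓ) :
    IsStationary L N u x q π := by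
  intro η _
  rw [inflow, outflow, Finset.sum_comm]
  refine Finset.sum_congr rfl fun k _ => Finset.sum_congr rfl fun ℓ _ => ?_
  split_ifs with hk
  · rcases eq_or_ne k ℓ with rfl | hkℓ
    · simp only [hopRate_self, mul_zero]
    · exact h η k ℓ hkℓ hk
  · rw [hopRate_of_source_eq_zero (by omega), mul_zero]

end Dynamics

section DetailedBalance

/-- Detailed balance of the single-site weights `F`: for any two distinct sites `k`, `ℓ`, the
currents between the occupations `(m + 1, n)` and `(m, n + 1)` of `(k, ℓ)` cancel, when a hop onto
a site `a` is proposed with rate parameter `x a`. -/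
def DetailedBalance {ι K : Type*} [Mul K] (u : ℕ → ℕ → K) (x : ι → K) (F : ι → ℕ → K) : Prop :=
  ∀ k ℓ, k ≠ ℓ → ∀ m n,
    F k (m + 1) * F ℓ n * (x ℓ * u (m + 1) n) = F k m * F ℓ (n + 1) * (x k * u (n + 1) m)

theorem prod_eq_mul_mul_prod_compl_pair {ι M : Type*} [Fintype ι] [DecidableEq ι] [CommMonoid M]
    {k ℓ : ι} (hkℓ : k ≠ ℓ) (g : ι → M) :
    ∏ a, g a = g k * g ℓ * ∏ a ∈ ({k, ℓ} : Finset ι)ᶜ, g a := by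
  rw [← Finset.prod_mul_prod_compl {k, ℓ}, Finset.prod_pair hkℓ]

theorem prod_compl_pair_move {L : ℕ} [NeZero L] (F : ZMod L → ℕ → ℝ) (η : ZMod L → ℕ)
    (k ℓ : ZMod L) :
    ∏ a ∈ ({k, ℓ} : Finset (ZMod L))ᶜ, F a (move L η k ℓ a) =
      ∏ a ∈ ({k, ℓ} : Finset (ZMod L))ᶜ, F a (η a) := by
  refine Finset.prod_congr rfl fun a ha => ?_
  simp only [Finset.mem_compl, Finset.mem_insert, Finset.mem_singleton, not_or] at ha
  rw [move_of_ne_of_ne ha.1 ha.2]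

variable {u : ℕ → ℕ → ℝ}

theorem DetailedBalance.isStationary {L N : ℕ} [NeZero L] {x : ZMod L → ℝ} {F : ZMod L → ℕ → ℝ}
    (h : DetailedBalance u x F) : IsStationary L N u x 1 (fun η => ∏ a, F a (η a)) := by
  refine isStationary_of_reversible fun η k ℓ hkℓ hk => ?_
  obtain ⟨m, hm⟩ := Nat.exists_eq_add_of_le' hk
  have hsource : move L η k ℓ k = m := by rw [move_source, hm, Nat.add_sub_cancel]
  have htarget : move L η k ℓ ℓ = η ℓ + 1 := move_target hkℓ
  rw [hopRate_one_eq_clearArcs_mul hkℓ hk,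
    hopRate_one_eq_clearArcs_mul hkℓ.symm (by omega), clearArcs_move,
    prod_eq_mul_mul_prod_compl_pair hkℓ, prod_eq_mul_mul_prod_compl_pair hkℓ,
    prod_compl_pair_move, hsource, htarget, hm]
  linear_combination (-(∏ a ∈ ({k, ℓ} : Finset (ZMod L))ᶜ, F a (η a)) * clearArcs L η k ℓ) *
    h k ℓ hkℓ m (η ℓ)

end DetailedBalance

section TwoSites

variable {u : ℕ → ℕ → ℝ} {x : ZMod 2 → ℝ} {q : ℝ} {η : ZMod 2 → ℕ}

theorem hopRate_two {k ℓ : ZMod 2} (hkℓ : k ≠ ℓ) (hk : 1 ≤ η k) :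
    hopRate 2 u x q η k ℓ = (1 + q) * (x ℓ * u (η k) (η ℓ)) := by
  have hright : RightClear 2 η k ℓ := fun i hpos hlt => by
    have := ZMod.val_lt (ℓ - k)
    omega
  have hleft : LeftClear 2 η k ℓ := fun i hpos hlt => by
    have := ZMod.val_lt (k - ℓ)
    omega
  simp only [hopRate, ne_eq, hkℓ, not_false_eq_true, hk, hright, hleft, and_self, if_true]
  ring

theorem sum_zmod_two {M : Type*} [AddCommMonoid M] (g : ZMod 2 → M) : ∑ a, g a = g 0 + g 1 :=
  Fin.sum_univ_two g

theorem outflow_two (π : (ZMod 2 → ℕ) → ℝ) :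
    outflow 2 u x q π η = (1 + q) * (π η * ((if 1 ≤ η 0 then x 1 * u (η 0) (η 1) else 0) +
      (if 1 ≤ η 1 then x 0 * u (η 1) (η 0) else 0))) := by
  have hrate (k ℓ : ZMod 2) (hkℓ : k ≠ ℓ) :
      hopRate 2 u x q η k ℓ = (1 + q) * if 1 ≤ η k then x ℓ * u (η k) (η ℓ) else 0 := by
    split_ifs with hk
    · exact hopRate_two hkℓ hk
    · rw [hopRate_of_source_eq_zero (by omega), mul_zero]
  simp only [outflow, sum_zmod_two, hopRate_self, hrate 0 1 zero_ne_one, hrate 1 0 one_ne_zero]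
  ring

theorem inflow_two (π : (ZMod 2 → ℕ) → ℝ) :
    inflow 2 u x q π η = (1 + q) *
      ((if 1 ≤ η 1 then π (move 2 η 1 0) * (x 1 * u (η 0 + 1) (η 1 - 1)) else 0) +
        (if 1 ≤ η 0 then π (move 2 η 0 1) * (x 0 * u (η 1 + 1) (η 0 - 1)) else 0)) := by
  have hrate (k ℓ : ZMod 2) (hkℓ : k ≠ ℓ) :
      hopRate 2 u x q (move 2 η ℓ k) k ℓ = (1 + q) * (x ℓ * u (η k + 1) (η ℓ - 1)) := by
    have htarget : move 2 η ℓ k k = η k + 1 := move_target hkℓ.symm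
    rw [hopRate_two hkℓ (by omega), htarget, move_source]
  simp only [inflow, sum_zmod_two, hopRate_self, hrate 0 1 zero_ne_one, hrate 1 0 one_ne_zero,
    mul_zero, ite_self, zero_add, add_zero, mul_add, mul_ite]
  congr 2 <;> ring

/-- The net current from `(m + 1, n)` to `(m, n + 1)` on the ring of two sites, under the product
measure with single-site weights `F`, when each site is reached along one arc only. -/
def netCurrent (u : ℕ → ℕ → ℝ) (x : ZMod 2 → ℝ) (F : ZMod 2 → ℕ → ℝ) (m n : ℕ) : ℝ :=
  F 0 (m + 1) * F 1 n * (x 1 * u (m + 1) n) - F 0 m * F 1 (n + 1) * (x 0 * u (n + 1) m)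

variable {F : ZMod 2 → ℕ → ℝ}

theorem inflow_sub_outflow_two :
    inflow 2 u x q (fun ζ => ∏ a, F a (ζ a)) η - outflow 2 u x q (fun ζ => ∏ a, F a (ζ a)) η =
      (1 + q) * ((if 1 ≤ η 1 then netCurrent u x F (η 0) (η 1 - 1) else 0) -
        (if 1 ≤ η 0 then netCurrent u x F (η 0 - 1) (η 1) else 0)) := by
  have hprod (g : ZMod 2 → ℝ) : ∏ a, g a = g 0 * g 1 := Fin.prod_univ_two g
  have h01 : move 2 η 0 1 1 = η 1 + 1 := move_target zero_ne_one
  have h10 : move 2 η 1 0 0 = η 0 + 1 := move_target one_ne_zero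
  simp only [inflow_two, outflow_two, hprod, move_source, h01, h10, netCurrent]
  split_ifs with h1 h0 h0
  · rw [Nat.sub_add_cancel h1, Nat.sub_add_cancel h0]
    ring
  · rw [Nat.sub_add_cancel h1]
    ring
  · rw [Nat.sub_add_cancel h0]
    ring
  · ring

theorem netCurrent_eq_zero (hq : 1 + q ≠ 0)
    (h : ∀ N, 1 ≤ N → IsStationary 2 N u x q (fun η => ∏ a, F a (η a))) (m n : ℕ) :
    netCurrent u x F m n = 0 := by
  have balance (a b : ℕ) (hab : 1 ≤ a + b) :
      (if 1 ≤ b then netCurrent u x F a (b - 1) else 0) -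
        (if 1 ≤ a then netCurrent u x F (a - 1) b else 0) = 0 := by
    obtain ⟨η, rfl, rfl⟩ : ∃ η : ZMod 2 → ℕ, η 0 = a ∧ η 1 = b :=
      ⟨(![a, b] : Fin 2 → ℕ), rfl, rfl⟩
    have hη := sub_eq_zero.mpr (h (η 0 + η 1) hab η (sum_zmod_two η))
    rw [inflow_sub_outflow_two] at hη
    exact (mul_eq_zero.mp hη).resolve_left hq
  induction m generalizing n with
  | zero => simpa using balance 0 (n + 1) (by omega)
  | succ m ih => simpa [ih (n + 1)] using balance (m + 1) (n + 1) (by omega)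

theorem detailedBalance_of_isStationary_two (hq : 1 + q ≠ 0)
    (h : ∀ N, 1 ≤ N → IsStationary 2 N u x q (fun η => ∏ a, F a (η a))) :
    DetailedBalance u x F := by
  have h01 (m n : ℕ) := sub_eq_zero.mp (netCurrent_eq_zero hq h m n)
  intro k ℓ hkℓ m n
  obtain ⟨rfl, rfl⟩ | ⟨rfl, rfl⟩ : k = 0 ∧ ℓ = 1 ∨ k = 1 ∧ ℓ = 0 := by
    revert k ℓ
    decide
  · exact h01 m n
  · linear_combination -h01 n m

end TwoSites

section Weights

variable {ι K : Type*} [Field K]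

/-- The condition of the theorem on the rate function `u`; the subtraction `m - 1` is exact because
`1 ≤ m`. -/
def RatioCondition (u : ℕ → ℕ → K) : Prop :=
  ∀ m n : ℕ, 1 ≤ m → 1 ≤ n →
    u m n / (u m 0 * u 1 n) = u (n + 1) (m - 1) / (u (n + 1) 0 * u 1 (m - 1))

/-- The one-point function of the homogeneous process: `∏_{i=1}^{n} u(1,i-1)/u(i,0)`, the product
being reindexed to start at `i = 0`. -/
def oneSiteWeight (u : ℕ → ℕ → K) (n : ℕ) : K :=
  ∏ i ∈ Finset.range n, u 1 i / u (i + 1) 0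

theorem oneSiteWeight_succ (u : ℕ → ℕ → K) (n : ℕ) :
    oneSiteWeight u (n + 1) = oneSiteWeight u n * (u 1 n / u (n + 1) 0) :=
  Finset.prod_range_succ _ n

variable {u : ℕ → ℕ → K}

theorem ratioCondition_iff (hu : ∀ m n, u (m + 1) n ≠ 0) :
    RatioCondition u ↔
      ∀ m n, u (m + 1) n * (u (n + 1) 0 * u 1 m) = u (n + 1) m * (u (m + 1) 0 * u 1 n) := by
  have cross (m n : ℕ) :
      u (m + 1) n / (u (m + 1) 0 * u 1 n) = u (n + 1) m / (u (n + 1) 0 * u 1 m) ↔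
        u (m + 1) n * (u (n + 1) 0 * u 1 m) = u (n + 1) m * (u (m + 1) 0 * u 1 n) :=
    div_eq_div_iff (mul_ne_zero (hu m 0) (hu 0 n)) (mul_ne_zero (hu n 0) (hu 0 m))
  constructor
  · rintro h m (_ | n)
    · ring
    · exact (cross m (n + 1)).mp (h (m + 1) (n + 1) (by omega) (by omega))
  · rintro h (_ | m) n hm -
    · omega
    · exact (cross m n).mpr (h m n)

theorem DetailedBalance.ratioCondition [Nontrivial ι] {f : ℕ → K} (hf : ∀ n, f n ≠ 0)
    (hu : ∀ m n, u (m + 1) n ≠ 0) (h : DetailedBalance u (fun _ : ι => 1) fun _ => f) :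
    RatioCondition u := by
  obtain ⟨k, ℓ, hkℓ⟩ := exists_pair_ne ι
  have balance := h k ℓ hkℓ
  refine (ratioCondition_iff hu).mpr fun m n => ?_
  have hne : f (m + 1) * f n * (f 1 * f 0) ≠ 0 := by simp [hf]
  refine mul_left_cancel₀ hne ?_
  linear_combination f 1 * f 0 * u (n + 1) 0 * u 1 m * balance m n -
    u (n + 1) m * f 1 * f n * u 1 n * balance m 0 + f 1 * f m * u 1 m * u (n + 1) m * balance n 0

theorem RatioCondition.detailedBalance (hu : ∀ m n, u (m + 1) n ≠ 0) (h : RatioCondition u)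
    (x : ι → K) : DetailedBalance u x fun a n => x a ^ n * oneSiteWeight u n := by
  intro k ℓ _ m n
  have exchange : u 1 m / u (m + 1) 0 * u (m + 1) n = u 1 n / u (n + 1) 0 * u (n + 1) m := by
    have hm := hu m 0
    have hn := hu n 0
    field_simp
    linear_combination (ratioCondition_iff hu).mp h m n
  simp only [oneSiteWeight_succ, pow_succ]
  linear_combination (x k ^ m * x k * x ℓ ^ n * x ℓ * oneSiteWeight u m * oneSiteWeight u n) *
    exchange

end Weights

section Factorised

variable {u : ℕ → ℕ → ℝ}

theorem IsRate.succ_ne_zero (hu : IsRate u) (m n : ℕ) : u (m + 1) n ≠ 0 :=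
  (hu.1 (m + 1) n (by omega)).ne'

theorem IsRate.oneSiteWeight_pos (hu : IsRate u) (n : ℕ) : 0 < oneSiteWeight u n :=
  Finset.prod_pos fun _ _ => div_pos (hu.1 _ _ le_rfl) (hu.1 _ _ (by omega))

theorem RatioCondition.factorisedPALRMP (hu : IsRate u) (h : RatioCondition u) :
    FactorisedPALRMP u 1 fun x n => x ^ n * oneSiteWeight u n :=
  ⟨fun _ n hx => mul_pos (pow_pos hx n) (hu.oneSiteWeight_pos n),
    fun _ _ _ _ _ x _ => (h.detailedBalance hu.succ_ne_zero x).isStationary⟩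

theorem FactorisedPALRMP.factorisedHomog {q : ℝ} {f : ℝ → ℕ → ℝ} (h : FactorisedPALRMP u q f) :
    FactorisedHomog u q (f 1) :=
  ⟨fun n => h.1 1 n one_pos, fun L N _ hL hN => h.2 L N hL hN (fun _ => 1) fun _ => one_pos⟩

end Factorised

theorem slrmp_factorised_iff_general (u : ℕ → ℕ → ℝ) (hu : IsRate u) :
    List.TFAE [
      RatioCondition u,
      FactorisedPALRMP u 1 fun x n => x ^ n * oneSiteWeight u n,
      ∃ f : ℝ → ℕ → ℝ, FactorisedPALRMP u 1 f,
      FactorisedHomog u 1 (oneSiteWeight u),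
      ∃ f : ℕ → ℝ, FactorisedHomog u 1 f,
      ∃ f : ℕ → ℝ, (∀ n, 0 < f n) ∧
        ∀ N, 1 ≤ N → IsStationary 2 N u (fun _ => 1) 1 fun η => ∏ a, f (η a)] := by
  tfae_have 1 → 2 := fun h => h.factorisedPALRMP hu
  tfae_have 2 → 3 := fun h => ⟨_, h⟩
  tfae_have 2 → 4 := fun h => by simpa only [one_pow, one_mul] using h.factorisedHomog
  tfae_have 3 → 5 := fun ⟨f, hf⟩ => ⟨f 1, hf.factorisedHomog⟩
  tfae_have 4 → 5 := fun h => ⟨_, h⟩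
  tfae_have 5 → 6 := fun ⟨f, hpos, hf⟩ => ⟨f, hpos, fun N hN => hf 2 N le_rfl hN⟩
  tfae_have 6 → 1 := fun ⟨f, hpos, hf⟩ =>
    (detailedBalance_of_isStationary_two (by norm_num) hf).ratioCondition
      (fun n => (hpos n).ne') hu.succ_ne_zero
  tfae_finish

/-- the stationary distribution corresponding to `u` is factorised both in
the SLRMP (`q = 1`) and in the homogeneous SLRMP iff the displayed condition on `u`
holds; in that case `f (x, n) = x ^ n * ∏_{i=1}^{n} (u (1,i-1) / u (i,0))` works for
the SLRMP and `f n = ∏_{i=1}^{n} (u (1,i-1) / u (i,0))` for the homogeneous SLRMP. -/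
theorem slrmp_factorised_iff
    (u : ℕ → ℕ → ℝ) (hu : IsRate u) :
    (((∃ f : ℝ → ℕ → ℝ, FactorisedPALRMP u 1 f) ∧
        ∃ f : ℕ → ℝ, FactorisedHomog u 1 f) ↔
      ∀ m n : ℕ, 1 ≤ m → 1 ≤ n →
        u m n / (u m 0 * u 1 n) = u (n + 1) (m - 1) / (u (n + 1) 0 * u 1 (m - 1))) ∧
    ((∀ m n : ℕ, 1 ≤ m → 1 ≤ n →
        u m n / (u m 0 * u 1 n) = u (n + 1) (m - 1) / (u (n + 1) 0 * u 1 (m - 1))) →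
      FactorisedPALRMP u 1 (fun x n => x ^ n * ∏ i ∈ Finset.range n, u 1 i / u (i + 1) 0) ∧
      FactorisedHomog u 1 (fun n => ∏ i ∈ Finset.range n, u 1 i / u (i + 1) 0)) := by
  have h := slrmp_factorised_iff_general u hu
  exact ⟨⟨fun hf => (h.out 0 4).mpr hf.2, fun hc => ⟨(h.out 0 2).mp hc, (h.out 0 4).mp hc⟩⟩,
    fun hc => ⟨(h.out 0 1).mp hc, (h.out 0 3).mp hc⟩⟩

end LRMP
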